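/- Let d ≥ 2, β ≥ 0 and L ≥ 2. Let Θ_β⁽ʰ⁾ denote the NTK recursion with bias parameter β and Θ_0⁽ʰ⁾ the same recursion with bias parameter 0, and define the bias kernel k^{Bias(L)}(x,z) = Θ_β⁽ᴸ⁻¹⁾(x,z) − Θ_0⁽ᴸ⁻¹⁾(x,z). Then k^{Bias(L)} is homogeneous of order 0: for all nonzero x, z ∈ ℝ^d, k^{Bias(L)}(x,z) = k^{Bias(L)}(x/‖x‖, z/‖z‖). -/

import Mathlib

open Real MeasureTheory
open scoped RealInnerProductSpace

/-- The covariance `Σ⁽ʰ⁾` in the NTK recursion for fully connected ReLU networks. -/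
noncomputable def ntkSigma (d : ℕ) : ℕ → EuclideanSpace ℝ (Fin d) → EuclideanSpace ℝ (Fin d) → ℝ
  | 0, x, z => ⟪x, z⟫
  | h + 1, x, z =>
      (1 / Real.pi) *
          ((ntkSigma d h x z / Real.sqrt (ntkSigma d h x x * ntkSigma d h z z)) *
              (Real.pi -
                Real.arccos (ntkSigma d h x z / Real.sqrt (ntkSigma d h x x * ntkSigma d h z z))) +
            Real.sqrt
              (1 - (ntkSigma d h x z / Real.sqrt (ntkSigma d h x x * ntkSigma d h z z)) ^ 2)) *
        Real.sqrt (ntkSigma d h x x * ntkSigma d h z z)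

/-- The normalized covariance `λ⁽ʰ⁾` in the NTK recursion. -/
noncomputable def ntkLam (d : ℕ) (h : ℕ) (x z : EuclideanSpace ℝ (Fin d)) : ℝ :=
  ntkSigma d h x z / Real.sqrt (ntkSigma d h x x * ntkSigma d h z z)

/-- The derivative covariance `Σ̇⁽ʰ⁾` in the NTK recursion (meaningful for `h ≥ 1`). -/
noncomputable def ntkSigmaDot (d : ℕ) (h : ℕ) (x z : EuclideanSpace ℝ (Fin d)) : ℝ :=
  (1 / Real.pi) * (Real.pi - Real.arccos (ntkLam d (h - 1) x z))

/-- The NTK recursion `Θ⁽ʰ⁾` with bias parameter `β` (bias initialized at zero).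
The NTK of an `L`-layer fully connected ReLU network is `k^{FC_β(L)} = Θ⁽ᴸ⁻¹⁾`. -/
noncomputable def ntkTheta (d : ℕ) (β : ℝ) :
    ℕ → EuclideanSpace ℝ (Fin d) → EuclideanSpace ℝ (Fin d) → ℝ
  | 0, x, z => ⟪x, z⟫ + β ^ 2
  | h + 1, x, z =>
      ntkTheta d β h x z * ntkSigmaDot d (h + 1) x z + ntkSigma d (h + 1) x z + β ^ 2

/-!
The difference `D = Θ_β − Θ_γ` satisfies a recursion in which the term `Σ⁽ʰ⁾` has cancelled:
`D⁽⁰⁾ = β² − γ²` and `D⁽ʰ⁺¹⁾ = D⁽ʰ⁾ · Σ̇⁽ʰ⁺¹⁾ + (β² − γ²)`. Only the `Σ̇⁽ʰ⁾` are left, and these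
depend on `x` and `z` through `λ⁽ʰ⁻¹⁾`, the quotient of two kernels homogeneous of order 1.
-/

/-- A kernel is homogeneous of order `n` if rescaling its arguments by positive factors `c` and `e`
multiplies it by `(c * e) ^ n`. On nonzero vectors of a normed space this amounts to
`k x z = (‖x‖ * ‖z‖) ^ n * k (x / ‖x‖) (z / ‖z‖)`; the form with free factors needs no norm. -/
def IsHomogeneousKernel {E : Type*} [SMul ℝ E] (n : ℕ) (k : E → E → ℝ) : Prop :=
  ∀ ⦃c e : ℝ⦄, 0 < c → 0 < e → ∀ x z : E, k (c • x) (e • z) = (c * e) ^ n * k x z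

namespace IsHomogeneousKernel

section SMul

variable {E : Type*} [SMul ℝ E] {m n : ℕ} {k l : E → E → ℝ}

theorem const (a : ℝ) : IsHomogeneousKernel 0 fun _ _ : E => a := by
  intro c e _ _ x z
  rw [pow_zero, one_mul]

theorem add (hk : IsHomogeneousKernel n k) (hl : IsHomogeneousKernel n l) :
    IsHomogeneousKernel n fun x z => k x z + l x z := by
  intro c e hc he x z
  simp only [hk hc he, hl hc he, mul_add]

theorem mul (hk : IsHomogeneousKernel m k) (hl : IsHomogeneousKernel n l) :
    IsHomogeneousKernel (m + n) fun x z => k x z * l x z := by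
  intro c e hc he x z
  simp only [hk hc he, hl hc he, pow_add, mul_mul_mul_comm]

theorem div (hk : IsHomogeneousKernel n k) (hl : IsHomogeneousKernel n l) :
    IsHomogeneousKernel 0 fun x z => k x z / l x z := by
  intro c e hc he x z
  have hce : (c * e) ^ n ≠ 0 := by positivity
  simp only [hk hc he, hl hc he, mul_div_mul_left _ _ hce, pow_zero, one_mul]

theorem comp_left (f : ℝ → ℝ) (hk : IsHomogeneousKernel 0 k) :
    IsHomogeneousKernel 0 fun x z => f (k x z) := by
  intro c e hc he x z
  simp only [hk hc he, pow_zero, one_mul]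

theorem sqrt_diag_mul_diag (hk : IsHomogeneousKernel n k) :
    IsHomogeneousKernel n fun x z => √(k x x * k z z) := by
  intro c e hc he x z
  have hce : 0 ≤ (c * e) ^ n := by positivity
  calc √(k (c • x) (c • x) * k (e • z) (e • z))
      = √(((c * e) ^ n) ^ 2 * (k x x * k z z)) := by
        rw [hk hc hc, hk he he]
        ring_nf
    _ = (c * e) ^ n * √(k x x * k z z) := by
        rw [Real.sqrt_mul (sq_nonneg _), Real.sqrt_sq hce]

end SMul

theorem real_inner {E : Type*} [SeminormedAddCommGroup E] [InnerProductSpace ℝ E] :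
    IsHomogeneousKernel 1 fun x z : E => ⟪x, z⟫ := by
  intro c e _ _ x z
  simp only [real_inner_smul_left, real_inner_smul_right]
  ring

theorem eq_mul_normalize {E : Type*} [NormedAddCommGroup E] [Module ℝ E] {n : ℕ} {k : E → E → ℝ}
    (hk : IsHomogeneousKernel n k) {x z : E} (hx : x ≠ 0) (hz : z ≠ 0) :
    k x z = (‖x‖ * ‖z‖) ^ n * k (‖x‖⁻¹ • x) (‖z‖⁻¹ • z) := by
  rw [← hk (norm_pos_iff.mpr hx) (norm_pos_iff.mpr hz), smul_inv_smul₀ (norm_ne_zero_iff.mpr hx),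
    smul_inv_smul₀ (norm_ne_zero_iff.mpr hz)]

end IsHomogeneousKernel

theorem isHomogeneousKernel_ntkSigma (d h : ℕ) : IsHomogeneousKernel 1 (ntkSigma d h) := by
  induction h with
  | zero => exact .real_inner
  | succ h ih =>
    have norms : IsHomogeneousKernel 1 fun x z => √(ntkSigma d h x x * ntkSigma d h z z) :=
      ih.sqrt_diag_mul_diag
    exact ((ih.div norms).comp_left
      fun t => (1 / π) * (t * (π - arccos t) + √(1 - t ^ 2))).mul norms

theorem isHomogeneousKernel_ntkLam (d h : ℕ) : IsHomogeneousKernel 0 (ntkLam d h) :=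
  (isHomogeneousKernel_ntkSigma d h).div (isHomogeneousKernel_ntkSigma d h).sqrt_diag_mul_diag

theorem isHomogeneousKernel_ntkSigmaDot (d h : ℕ) : IsHomogeneousKernel 0 (ntkSigmaDot d h) :=
  (isHomogeneousKernel_ntkLam d (h - 1)).comp_left fun t => (1 / π) * (π - arccos t)

theorem ntkTheta_zero_sub_ntkTheta_zero (d : ℕ) (β γ : ℝ) (x z : EuclideanSpace ℝ (Fin d)) :
    ntkTheta d β 0 x z - ntkTheta d γ 0 x z = β ^ 2 - γ ^ 2 :=
  add_sub_add_left_eq_sub _ _ _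

theorem ntkTheta_succ_sub_ntkTheta_succ (d : ℕ) (β γ : ℝ) (h : ℕ)
    (x z : EuclideanSpace ℝ (Fin d)) :
    ntkTheta d β (h + 1) x z - ntkTheta d γ (h + 1) x z =
      (ntkTheta d β h x z - ntkTheta d γ h x z) * ntkSigmaDot d (h + 1) x z +
        (β ^ 2 - γ ^ 2) := by
  simp only [ntkTheta]
  ring

theorem isHomogeneousKernel_ntkTheta_sub_ntkTheta (d : ℕ) (β γ : ℝ) (h : ℕ) :
    IsHomogeneousKernel 0 fun x z => ntkTheta d β h x z - ntkTheta d γ h x z := by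
  induction h with
  | zero =>
    simp only [ntkTheta_zero_sub_ntkTheta_zero]
    exact .const _
  | succ h ih =>
    simp only [ntkTheta_succ_sub_ntkTheta_succ]
    exact (ih.mul (isHomogeneousKernel_ntkSigmaDot d (h + 1))).add (.const _)

/-- The bias kernel `k^{Bias(L)} = Θ_β⁽ᴸ⁻¹⁾ − Θ_0⁽ᴸ⁻¹⁾` is homogeneous of order 0:
for all nonzero `x, z ∈ ℝ^d`, `k^{Bias(L)}(x,z) = k^{Bias(L)}(x/‖x‖, z/‖z‖)`. -/
theorem ntk_bias_kernel_homogeneous_order_zero (d : ℕ) (hd : 2 ≤ d) (β : ℝ) (hβ : 0 ≤ β)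
    (L : ℕ) (hL : 2 ≤ L) (x z : EuclideanSpace ℝ (Fin d)) (hx : x ≠ 0) (hz : z ≠ 0) :
    ntkTheta d β (L - 1) x z - ntkTheta d 0 (L - 1) x z =
      ntkTheta d β (L - 1) (‖x‖⁻¹ • x) (‖z‖⁻¹ • z) -
        ntkTheta d 0 (L - 1) (‖x‖⁻¹ • x) (‖z‖⁻¹ • z) := by
  simpa only [pow_zero, one_mul] using
    (isHomogeneousKernel_ntkTheta_sub_ntkTheta d β 0 (L - 1)).eq_mul_normalize hx hz
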